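/- Let (X,d) be an ultrametric space with base point a ∈ X. Then the chordal function d_a on Ẋ = X ∪ {∞}, defined by d_a(x,y) = d(x,y)/(max{1,d(x,a)}·max{1,d(y,a)}) for x,y ∈ X, d_a(x,∞) = 1/max{1,d(x,a)}, and d_a(∞,∞) = 0, is an ultrametric on Ẋ. -/

import Mathlib

/-- The chordal function `d_a` on `Ẋ = X ∪ {∞}` (modelled as `Option X`,
with `none` playing the role of `∞`):
`d_a(x,y) = d(x,y)/(max{1,d(x,a)}·max{1,d(y,a)})` for `x, y ∈ X`,
`d_a(x,∞) = 1/max{1,d(x,a)}`, and `d_a(∞,∞) = 0`. -/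
noncomputable def chordal {X : Type*} [MetricSpace X] (a : X) :
    Option X → Option X → ℝ
  | some x, some y => dist x y / (max 1 (dist x a) * max 1 (dist y a))
  | some x, none => 1 / max 1 (dist x a)
  | none, some y => 1 / max 1 (dist y a)
  | none, none => 0

lemma chordal_aux {a b c A B C : ℝ} (hA : 1 ≤ A) (hB : 1 ≤ B) (hC : 1 ≤ C)
    (h0 : 0 ≤ a) (h1 : 0 ≤ b) (h2 : 0 ≤ c)
    (h : a ≤ b ∨ a ≤ c) (hAB : a ≤ A ∨ a ≤ B)
    (hCA : C ≤ A ∨ C ≤ b) (hCB : C ≤ B ∨ C ≤ c) :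
    a * C ≤ b * B ∨ a * C ≤ c * A := by
  have key : ∀ {u v w t : ℝ}, 0 ≤ u → 1 ≤ v → u ≤ w → v ≤ t → u * v ≤ w * t := by
    intro u v w t hu hv h1 h2
    exact mul_le_mul h1 h2 (by linarith) (by linarith)
  have key2 : ∀ {u v w t : ℝ}, 0 ≤ u → 1 ≤ v → u ≤ t → v ≤ w → u * v ≤ w * t := by
    intro u v w t hu hv h1 h2
    rw [mul_comm w t]; exact key hu hv h1 h2
  rcases hCA with hCA | hCA
  · rcases hCB with hCB | hCB
    · rcases h with h | h
      · exact Or.inl (key h0 hC h hCB)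
      · exact Or.inr (key h0 hC h hCA)
    · rcases hAB with hAB | hAB
      · exact Or.inr (key2 h0 hC hAB hCB)
      · rcases le_total A B with hh | hh
        · rcases h with h | h
          · exact Or.inl (key h0 hC h (hCA.trans hh))
          · exact Or.inr (key h0 hC h hCA)
        · exact Or.inr (key2 h0 hC (hAB.trans hh) hCB)
  · rcases hAB with hAB | hAB
    · rcases hCB with hCB | hCB
      · rcases le_total A B with hh | hh
        · exact Or.inl (key2 h0 hC (hAB.trans hh) hCA)
        · rcases h with h | h
          · exact Or.inl (key h0 hC h hCB)
          · exact Or.inr (key h0 hC h (hCB.trans hh))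
      · exact Or.inr (key2 h0 hC hAB hCB)
    · exact Or.inl (key2 h0 hC hAB hCA)

/-- For an ultrametric space `(X,d)` with base point `a`, the
chordal function `d_a` is an ultrametric on `Ẋ = X ∪ {∞}`: it is symmetric,
vanishes exactly on the diagonal, and satisfies the strong triangle
inequality. -/
theorem chordal_ultrametric {X : Type*} [MetricSpace X]
    (hu : ∀ x y z : X, dist x y ≤ max (dist x z) (dist z y)) (a : X) :
    (∀ p q : Option X, chordal a p q = chordal a q p) ∧
    (∀ p q : Option X, chordal a p q = 0 ↔ p = q) ∧
    (∀ p q r : Option X, chordal a p q ≤ max (chordal a p r) (chordal a r q)) := by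
  have hp : ∀ x : X, 1 ≤ max 1 (dist x a) := fun x => le_max_left _ _
  have hp0 : ∀ x : X, 0 < max 1 (dist x a) := fun x => lt_of_lt_of_le one_pos (hp x)
  have hd : ∀ x y : X, dist x y ≤ max 1 (dist x a) ∨ dist x y ≤ max 1 (dist y a) := by
    intro x y
    rcases le_max_iff.1 (hu x y a) with h | h
    · exact Or.inl (h.trans (le_max_right _ _))
    · rw [dist_comm a y] at h
      exact Or.inr (h.trans (le_max_right _ _))
  have hm : ∀ x z : X, max 1 (dist z a) ≤ max 1 (dist x a) ∨ max 1 (dist z a) ≤ dist x z := by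
    intro x z
    rcases le_total (dist z a) 1 with h1 | h1
    · left; rw [max_eq_left h1]; exact hp x
    · rw [max_eq_right h1]
      rcases le_max_iff.1 (hu z a x) with h | h
      · right; rwa [dist_comm x z]
      · left; exact h.trans (le_max_right _ _)
  have hsym : ∀ p q : Option X, chordal a p q = chordal a q p := by
    rintro (_ | x) (_ | y) <;> simp only [chordal]
    rw [dist_comm, mul_comm]
  have hinf : ∀ x z : X, 1 / max 1 (dist x a) ≤
      max (dist x z / (max 1 (dist x a) * max 1 (dist z a))) (1 / max 1 (dist z a)) := by
    intro x z
    have hx := hp0 x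
    have hz := hp0 z
    rw [le_max_iff]
    rcases hm x z with h | h
    · exact Or.inr (one_div_le_one_div_of_le hz h)
    · left
      rw [div_le_div_iff₀ hx (mul_pos hx hz)]
      nlinarith
  refine ⟨hsym, ?_, ?_⟩
  · rintro (_ | x) (_ | y) <;> simp only [chordal]
    · have := (hp0 y).ne'
      simp [this]
    · have := (hp0 x).ne'
      simp [this]
    · rw [div_eq_zero_iff, or_iff_left (mul_pos (hp0 x) (hp0 y)).ne', dist_eq_zero,
        Option.some_inj]
  · rintro (_ | x) (_ | y) (_ | z)
    · simp [chordal]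
    · have := (hp0 z).le
      simp only [chordal, max_self]
      positivity
    · exact le_max_right _ _
    · rw [hsym none, max_comm, hsym none, hsym (some z)]
      exact hinf y z
    · exact le_max_left _ _
    · exact hinf x z
    · simp only [chordal]
      have hx := hp0 x
      have hy := hp0 y
      rw [le_max_iff, div_le_div_iff₀ (mul_pos hx hy) hx, div_le_div_iff₀ (mul_pos hx hy) hy]
      rcases hd x y with h | h
      · right; nlinarith
      · left; nlinarith
    · simp only [chordal]
      have hx := hp0 x
      have hy := hp0 y
      have hz := hp0 z
      have hCB := hm y z
      rw [dist_comm y z] at hCB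
      have := chordal_aux (hp x) (hp y) (hp z) dist_nonneg dist_nonneg dist_nonneg
        (le_max_iff.1 (hu x y z)) (hd x y) (hm x z) hCB
      rw [le_max_iff, div_le_div_iff₀ (mul_pos hx hy) (mul_pos hx hz),
        div_le_div_iff₀ (mul_pos hx hy) (mul_pos hz hy)]
      rcases this with h | h
      · left
        have := mul_le_mul_of_nonneg_left h hx.le
        linarith
      · right
        have := mul_le_mul_of_nonneg_left h hy.le
        linarith
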